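/- arXiv:1903.05698 — 6 statements merged into one kernel-verified Lean document; each statement's English description precedes it below -/
import Mathlib

section
/- For every x ∈ ℝ^n and y ∈ ℝ^m, the inconsistency equals the minimum of the restricted inconsistencies over all index sets of size m − q: inf{ (1/2)·Σ_{i=1}^m (y_i − H_i x + a_i)²/W_i : a ∈ ℝ^m with at most q nonzero entries } = min{ (1/2)·Σ_{i∈I} (y_i − H_i x)²/W_i : I ⊆ {1,…,m}, |I| = m − q }. In particular the infimum defining d_x(y) is attained. -/
/-- The inconsistency `d_x(y)`: infimum of `(1/2)·Σ_i (y_i − H_i x + a_i)²/W_i`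
over `q`-sparse vectors `a`. -/
noncomputable def dinc (m n q : ℕ) (H : Matrix (Fin m) (Fin n) ℝ) (W : Fin m → ℝ)
    (x : Fin n → ℝ) (y : Fin m → ℝ) : ℝ :=
  sInf { v : ℝ | ∃ a : Fin m → ℝ, (Function.support a).ncard ≤ q ∧
    v = (1 / 2 : ℝ) * ∑ i, (y i - (∑ j, H i j * x j) + a i) ^ 2 / W i }

/-- The restricted inconsistency `d_x(y, I) := (1/2)·Σ_{i∈I} (y_i − H_i x)²/W_i`. -/
noncomputable def dres (m n : ℕ) (H : Matrix (Fin m) (Fin n) ℝ) (W : Fin m → ℝ)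
    (x : Fin n → ℝ) (y : Fin m → ℝ) (I : Finset (Fin m)) : ℝ :=
  (1 / 2 : ℝ) * ∑ i ∈ I, (y i - (∑ j, H i j * x j)) ^ 2 / W i

/-- the inconsistency equals the minimum of the restricted
inconsistencies over index sets of size `m − q`, and the infimum defining
`d_x(y)` is attained. -/
theorem stmt_1 (m n q : ℕ) (hm : 1 ≤ m) (hn : 1 ≤ n) (hq : q ≤ m)
    (H : Matrix (Fin m) (Fin n) ℝ) (W : Fin m → ℝ) (hW : ∀ i, 0 < W i)
    (x : Fin n → ℝ) (y : Fin m → ℝ) :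
    (∃ I : Finset (Fin m), I.card = m - q ∧
        dinc m n q H W x y = dres m n H W x y I ∧
        ∀ J : Finset (Fin m), J.card = m - q →
          dres m n H W x y I ≤ dres m n H W x y J) ∧
    ∃ a : Fin m → ℝ, (Function.support a).ncard ≤ q ∧
      dinc m n q H W x y =
        (1 / 2 : ℝ) * ∑ i, (y i - (∑ j, H i j * x j) + a i) ^ 2 / W i := by
  classical
  obtain ⟨I, hI, hmin⟩ := Finset.exists_min_image
    ((Finset.univ : Finset (Fin m)).powersetCard (m - q)) (dres m n H W x y)
    (Finset.powersetCard_nonempty.2 (by simp))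
  have hIc : I.card = m - q := (Finset.mem_powersetCard.1 hI).2
  have hmin' : ∀ J : Finset (Fin m), J.card = m - q →
      dres m n H W x y I ≤ dres m n H W x y J := fun J hJ =>
    hmin J (Finset.mem_powersetCard.2 ⟨Finset.subset_univ _, hJ⟩)
  let a : Fin m → ℝ := fun i => if i ∈ I then 0 else -(y i - ∑ j, H i j * x j)
  have ha : (Function.support a).ncard ≤ q := by
    have hsub : Function.support a ⊆ ((Iᶜ : Finset (Fin m)) : Set (Fin m)) := by
      intro i hi
      simp only [Finset.coe_compl, Set.mem_compl_iff, Finset.mem_coe]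
      intro h
      exact hi (by simp [a, h])
    have h1 := Set.ncard_le_ncard hsub (Finset.finite_toSet _)
    rw [Set.ncard_coe_finset, Finset.card_compl, Fintype.card_fin, hIc] at h1
    omega
  have hval : dres m n H W x y I =
      (1 / 2 : ℝ) * ∑ i, (y i - (∑ j, H i j * x j) + a i) ^ 2 / W i := by
    unfold dres
    congr 1
    rw [← Finset.sum_subset (Finset.subset_univ I)]
    · exact Finset.sum_congr rfl fun i hi => by simp [a, hi]
    · intro i _ hi
      simp [a, hi]
  have hleast : IsLeast { v : ℝ | ∃ a : Fin m → ℝ, (Function.support a).ncard ≤ q ∧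
      v = (1 / 2 : ℝ) * ∑ i, (y i - (∑ j, H i j * x j) + a i) ^ 2 / W i }
      (dres m n H W x y I) := by
    refine ⟨⟨a, ha, hval⟩, ?_⟩
    rintro v ⟨b, hb, rfl⟩
    have hb' : (Finset.univ.filter fun i => b i ≠ 0).card ≤ q := by
      rw [← Set.ncard_coe_finset]
      convert hb using 2
      ext i
      simp
    have hz : m - q ≤ (Finset.univ.filter fun i => b i ≠ 0)ᶜ.card := by
      rw [Finset.card_compl, Fintype.card_fin]
      omega
    obtain ⟨J, hJs, hJ⟩ := Finset.exists_subset_card_eq hz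
    refine (hmin' J hJ).trans ?_
    unfold dres
    refine mul_le_mul_of_nonneg_left ?_ (by norm_num)
    have hJb : ∑ i ∈ J, (y i - (∑ j, H i j * x j)) ^ 2 / W i =
        ∑ i ∈ J, (y i - (∑ j, H i j * x j) + b i) ^ 2 / W i := by
      refine Finset.sum_congr rfl fun i hi => ?_
      have h0 : b i = 0 := by simpa using hJs hi
      rw [h0, add_zero]
    rw [hJb]
    exact Finset.sum_le_sum_of_subset_of_nonneg (Finset.subset_univ J)
      fun i _ _ => div_nonneg (sq_nonneg _) (hW i).le
  have hd : dinc m n q H W x y = dres m n H W x y I := hleast.csInf_eq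
  exact ⟨⟨I, hIc, hd, hmin'⟩, a, ha, hd.trans hval⟩
end

section
/- For every y ∈ ℝ^m and φ ∈ ℝ, the sublevel set of the inconsistency is the union of the sublevel sets of the restricted inconsistencies over all index sets of size m − q: X(y,φ) = ⋃_{I ⊆ {1,…,m}, |I| = m−q} { x ∈ ℝ^n : d_x(y, I) ≤ φ }. -/
/-- the sublevel set `X(y,φ)` of the inconsistency equals the union
of the sublevel sets of the restricted inconsistencies over index sets of size
`m − q`. -/
theorem stmt_2 (m n q : ℕ) (hm : 1 ≤ m) (hn : 1 ≤ n) (hq : q ≤ m)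
    (H : Matrix (Fin m) (Fin n) ℝ) (W : Fin m → ℝ) (hW : ∀ i, 0 < W i)
    (y : Fin m → ℝ) (φ : ℝ) :
    { x : Fin n → ℝ | dinc m n q H W x y ≤ φ } =
      ⋃ I ∈ { I : Finset (Fin m) | I.card = m - q },
        { x : Fin n → ℝ | dres m n H W x y I ≤ φ } := by
  have key : ∀ x : Fin n → ℝ, ∀ a : Fin m → ℝ, (Function.support a).ncard ≤ q →
      ∃ I : Finset (Fin m), I.card = m - q ∧ dres m n H W x y I ≤
        (1 / 2 : ℝ) * ∑ i, (y i - (∑ j, H i j * x j) + a i) ^ 2 / W i := by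
    intro x a ha
    classical
    have hs : Function.support a = ((Finset.univ.filter fun i => a i ≠ 0 : Finset (Fin m)) : Set (Fin m)) := by
      ext i; simp
    rw [hs, Set.ncard_coe_finset] at ha
    have hc : m - q ≤ ((Finset.univ.filter fun i => a i ≠ 0)ᶜ : Finset (Fin m)).card := by
      rw [Finset.card_compl, Fintype.card_fin]; omega
    obtain ⟨I, hI, hIc⟩ := Finset.exists_subset_card_eq hc
    refine ⟨I, hIc, ?_⟩
    unfold dres
    apply mul_le_mul_of_nonneg_left _ (by norm_num)
    calc ∑ i ∈ I, (y i - (∑ j, H i j * x j)) ^ 2 / W i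
        = ∑ i ∈ I, (y i - (∑ j, H i j * x j) + a i) ^ 2 / W i := by
          apply Finset.sum_congr rfl
          intro i hi
          have h0 : a i = 0 := by simpa using hI hi
          rw [h0, add_zero]
      _ ≤ _ := Finset.sum_le_sum_of_subset_of_nonneg (Finset.subset_univ I)
          (fun i _ _ => div_nonneg (sq_nonneg _) (hW i).le)
  ext x
  simp only [Set.mem_setOf_eq, Set.mem_iUnion, exists_prop]
  constructor
  · intro h
    have hne : (Finset.powersetCard (m - q) (Finset.univ : Finset (Fin m))).Nonempty := by
      apply Finset.powersetCard_nonempty_of_le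
      simp
    obtain ⟨I, hI, hmin⟩ := Finset.exists_min_image _ (fun I => dres m n H W x y I) hne
    refine ⟨I, (Finset.mem_powersetCard.1 hI).2, le_trans ?_ h⟩
    unfold dinc
    apply le_csInf
    · exact ⟨_, 0, by simp, rfl⟩
    · rintro v ⟨a, ha, rfl⟩
      obtain ⟨J, hJ, hle⟩ := key x a ha
      exact (hmin J (Finset.mem_powersetCard.2 ⟨Finset.subset_univ _, hJ⟩)).trans hle
  · rintro ⟨I, hI, h⟩
    classical
    refine le_trans ?_ h
    unfold dinc
    apply csInf_le
    · refine ⟨0, ?_⟩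
      rintro v ⟨a, _, rfl⟩
      exact mul_nonneg (by norm_num)
        (Finset.sum_nonneg fun i _ => div_nonneg (sq_nonneg _) (hW i).le)
    · refine ⟨fun i => if i ∈ I then 0 else -(y i - (∑ j, H i j * x j)), ?_, ?_⟩
      · have hsub : Function.support (fun i => if i ∈ I then (0 : ℝ) else
            -(y i - (∑ j, H i j * x j))) ⊆ ((Iᶜ : Finset (Fin m)) : Set (Fin m)) := by
          intro i hi
          by_contra hc
          have : i ∈ I := by simpa using hc
          simp [this] at hi
        refine (Set.ncard_le_ncard hsub (Finset.finite_toSet _)).trans ?_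
        rw [Set.ncard_coe_finset, Finset.card_compl, Fintype.card_fin]
        omega
      · unfold dres
        congr 1
        apply Finset.sum_subset_zero_on_sdiff (Finset.subset_univ I)
        · intro i hi
          have : i ∉ I := by simpa using hi
          simp [this]
        · intro i hi
          simp [hi]
end

section
/- Consider the homogeneous scalar case: n = 1, H_i = 1 for all i, and W_i = W/2 for all i with W > 0, and assume 2q < m. Then for every y ∈ ℝ^m and every x ∈ ℝ: d_x(y) ≥ (m − 2q)·(x − trim(y))²/W, where d_x(y) = inf{ Σ_{i=1}^m (y_i − x + a_i)²/W : a ∈ ℝ^m with at most q nonzero entries }. -/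
theorem aux_gap {n m : ℕ} (e : Fin n → Fin m) (he : StrictMono e) (i : Fin n) (d : ℕ) :
    ∀ (h : (i : ℕ) + d < n), (e i : ℕ) + d ≤ (e ⟨i + d, h⟩ : ℕ) := by
  induction d with
  | zero => intro h; simp
  | succ d ih =>
    intro h
    have h1 := ih (by omega)
    have h2 : e ⟨i + d, by omega⟩ < e ⟨i + (d + 1), h⟩ := he (by
      rw [Fin.lt_def]; simp)
    rw [Fin.lt_def] at h2
    omega

theorem aux_cs {n m : ℕ} (z : Fin m → ℝ) (S : Finset (Fin m)) (f : Fin n → Fin m)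
    (hf : Function.Injective f) (hS : ∀ k, f k ∈ S) :
    (∑ k, z (f k)) ^ 2 ≤ n * ∑ i ∈ S, z i ^ 2 := by
  have h1 := sq_sum_le_card_mul_sum_sq (s := (Finset.univ : Finset (Fin n)))
    (f := fun k => z (f k))
  rw [Finset.card_univ, Fintype.card_fin] at h1
  refine h1.trans ?_
  apply mul_le_mul_of_nonneg_left _ (Nat.cast_nonneg n)
  rw [← Finset.sum_image (s := Finset.univ) (g := f) (f := fun i => z i ^ 2)
    (fun a _ b _ h => hf h)]
  apply Finset.sum_le_sum_of_subset_of_nonneg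
  · intro i hi
    obtain ⟨k, -, rfl⟩ := Finset.mem_image.1 hi
    exact hS k
  · intros; positivity

theorem aux_main (n q : ℕ) (hn : 0 < n) (z : Fin (n + 2 * q) → ℝ) (hz : Monotone z)
    (S : Finset (Fin (n + 2 * q))) (hS : n + q ≤ S.card) :
    (∑ k : Fin n, z ⟨k + q, by omega⟩) ^ 2 ≤ n * ∑ i ∈ S, z i ^ 2 := by
  obtain ⟨S', hS', hc⟩ := Finset.exists_subset_card_eq hS
  set e := S'.orderEmbOfFin hc with he
  have hmem : ∀ k, e k ∈ S := fun k => hS' (Finset.orderEmbOfFin_mem S' hc k)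
  have hlo : ∀ k : Fin (n + q), (k : ℕ) ≤ e k := by
    intro k
    have := aux_gap e e.strictMono ⟨0, by omega⟩ k (by simp)
    simp only [Nat.zero_add, zero_add, Fin.eta] at this
    omega
  have hhi : ∀ k : Fin (n + q), (e k : ℕ) ≤ k + q := by
    intro k
    have h := aux_gap e e.strictMono k (n + q - 1 - k) (by omega)
    have := (e ⟨k + (n + q - 1 - k), by omega⟩).2
    omega
  rcases le_total 0 (∑ k : Fin n, z ⟨k + q, by omega⟩) with h | h
  · refine le_trans ?_ (aux_cs z S (fun k : Fin n => e ⟨k + q, by omega⟩) ?_ (fun k => hmem _))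
    · apply pow_le_pow_left₀ h
      apply Finset.sum_le_sum
      intro k _
      apply hz
      rw [Fin.le_def]
      exact hlo ⟨k + q, by omega⟩
    · intro a b hab
      have := e.injective hab
      simp only [Fin.mk.injEq] at this
      exact Fin.ext (by omega)
  · refine le_trans ?_ (aux_cs z S (fun k : Fin n => e ⟨k, by omega⟩) ?_ (fun k => hmem _))
    · have : ∑ k : Fin n, z (e ⟨k, by omega⟩) ≤ ∑ k : Fin n, z ⟨k + q, by omega⟩ := by
        apply Finset.sum_le_sum
        intro k _
        apply hz
        rw [Fin.le_def]
        exact hhi ⟨k, by omega⟩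
      beta_reduce
      nlinarith
    · intro a b hab
      have := e.injective hab
      simp only [Fin.mk.injEq] at this
      exact Fin.ext (by omega)

/-- homogeneous scalar case. With `H_i = 1`, `W_i = W/2`, the
inconsistency `d_x(y) = inf { Σ (y_i − x + a_i)²/W : a q-sparse }` is bounded
below by `(m − 2q)·(x − trim(y))²/W`, where `trim(y)` is the trimmed mean of
the entries of `y` (discarding the `q` largest and `q` smallest ones). The
sorted entries of `y` are given via a monotone rearrangement `y ∘ σ`. -/
theorem stmt_11 (m q : ℕ) (hq : 2 * q < m) (W : ℝ) (hW : 0 < W)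
    (y : Fin m → ℝ) (x : ℝ)
    (σ : Equiv.Perm (Fin m)) (hσ : Monotone fun i => y (σ i)) :
    sInf { v : ℝ | ∃ a : Fin m → ℝ, (Function.support a).ncard ≤ q ∧
        v = ∑ i, (y i - x + a i) ^ 2 / W } ≥
      (m - 2 * q : ℝ) *
        (x - (1 / (m - 2 * q : ℝ)) *
          ∑ i ∈ Finset.univ.filter (fun i : Fin m => q ≤ (i : ℕ) ∧ (i : ℕ) < m - q),
            y (σ i)) ^ 2 / W := by
  obtain ⟨n, rfl⟩ : ∃ n, m = n + 2 * q := ⟨m - 2 * q, by omega⟩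
  have hn : 0 < n := by omega
  have hnR : (0 : ℝ) < n := by exact_mod_cast hn
  have hT : ∀ g : Fin (n + 2 * q) → ℝ, ∑ i ∈ Finset.univ.filter
      (fun i : Fin (n + 2 * q) => q ≤ (i : ℕ) ∧ (i : ℕ) < n + 2 * q - q), g i
      = ∑ k : Fin n, g ⟨k + q, by omega⟩ := by
    intro g
    symm
    refine Finset.sum_bij (fun k _ => ⟨k + q, by omega⟩) ?_ ?_ ?_ ?_
    · intro k _
      simp only [Finset.mem_filter, Finset.mem_univ, true_and]
      omega
    · intro a _ b _ hab
      simp only [Fin.mk.injEq] at hab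
      exact Fin.ext (by omega)
    · intro b hb
      simp only [Finset.mem_filter, Finset.mem_univ, true_and] at hb
      exact ⟨⟨b - q, by omega⟩, Finset.mem_univ _, Fin.ext (by simp; omega)⟩
    · intros; rfl
  rw [hT]
  have hc : ((n + 2 * q : ℕ) : ℝ) - 2 * q = n := by push_cast; ring
  rw [hc]
  apply le_csInf
  · exact ⟨_, 0, by simp, rfl⟩
  rintro v ⟨a, ha, rfl⟩
  rw [← Finset.sum_div]
  apply div_le_div_of_nonneg_right _ hW.le
  set S : Finset (Fin (n + 2 * q)) := Finset.univ.filter (fun i => a (σ i) = 0) with hS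
  have hcard : n + q ≤ S.card := by
    have h1 : (Finset.univ.filter (fun i => ¬ a (σ i) = 0)).card ≤ q := by
      refine le_trans ?_ ha
      rw [Set.ncard_eq_toFinset_card _ (Set.toFinite _)]
      apply Finset.card_le_card_of_injOn σ
      · intro i hi
        simpa using hi
      · exact σ.injective.injOn
    have h2 := Finset.card_filter_add_card_filter_not (s := (Finset.univ : Finset (Fin (n + 2 * q))))
      (fun i => a (σ i) = 0)
    rw [Finset.card_univ, Fintype.card_fin] at h2
    have h3 : S.card = (Finset.univ.filter (fun i => a (σ i) = 0)).card := by
      rw [hS]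
    omega
  have key := aux_main n q hn (fun i => y (σ i) - x)
    (fun i j h => sub_le_sub_right (hσ h) x) S hcard
  have hle : ∑ i ∈ S, (y (σ i) - x) ^ 2 ≤ ∑ i, (y i - x + a i) ^ 2 := by
    rw [← Equiv.sum_comp σ]
    calc ∑ i ∈ S, (y (σ i) - x) ^ 2 = ∑ i ∈ S, (y (σ i) - x + a (σ i)) ^ 2 := by
          apply Finset.sum_congr rfl
          intro i hi
          have : a (σ i) = 0 := by simpa [hS] using hi
          rw [this, add_zero]
      _ ≤ _ := Finset.sum_le_sum_of_subset_of_nonneg (Finset.subset_univ _)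
          (by intros; positivity)
  refine le_trans ?_ hle
  simp only [Finset.sum_sub_distrib, Finset.sum_const, Finset.card_univ, Fintype.card_fin,
    nsmul_eq_mul] at key
  set A := ∑ k : Fin n, y (σ ⟨k + q, by omega⟩)
  have : (n : ℝ) * (x - 1 / n * A) ^ 2 = (A - n * x) ^ 2 / n := by
    field_simp
    ring
  rw [this, div_le_iff₀ hnR]
  linarith
end

section
/- Let m and q be integers with 2q ≤ m, let y ∈ ℝ^m, and let x ∈ ℝ. Then for every index set I ⊆ {1,…,m} with |I| = m − q: Σ_{i∈I} (y_i − x)² ≥ Σ_{i=q+1}^{m−q} (y_[i] − x)², where y_[1] ≤ y_[2] ≤ … ≤ y_[m] are the entries of y sorted in increasing order. That is, the sum of squared residuals over any (m−q)-subset of the coordinates dominates the sum of squared residuals over the middle m − 2q order statistics of y. -/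
theorem emb_gap {n m : ℕ} (e : Fin n → Fin m) (he : StrictMono e) (d : ℕ) :
    ∀ (j : ℕ) (h : j + d < n), (e ⟨j, by omega⟩ : ℕ) + d ≤ e ⟨j + d, h⟩ := by
  induction d with
  | zero => intro j h; simp
  | succ d ih =>
    intro j h
    have h1 := ih j (by omega)
    have h2 : e ⟨j + d, by omega⟩ < e ⟨j + (d + 1), h⟩ := he (by rw [Fin.lt_def]; change j + d < j + (d + 1); omega)
    rw [Fin.lt_def] at h2
    omega

theorem core (m q : ℕ) (hq : 2 * q ≤ m) (f : Fin m → ℝ) (hf : Monotone f)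
    (J : Finset (Fin m)) (hJ : J.card = m - q) :
    ∑ i ∈ Finset.univ.filter (fun i : Fin m => q ≤ (i : ℕ) ∧ (i : ℕ) < m - q), f i ^ 2
      ≤ ∑ i ∈ J, f i ^ 2 := by
  classical
  let e := J.orderEmbOfFin hJ
  have he : StrictMono e := e.strictMono
  have hlo : ∀ (i : ℕ) (h : i < m - q), i ≤ (e ⟨i, h⟩ : ℕ) := by
    intro i h
    have h0 := emb_gap e he i 0 (by omega)
    simp only [Nat.zero_add] at h0
    omega
  have hhi : ∀ (i : ℕ) (h : i < m - q), (e ⟨i, h⟩ : ℕ) ≤ i + q := by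
    intro i h
    have h0 := emb_gap e he (m - q - 1 - i) i (by omega)
    have h1 := (e ⟨i + (m - q - 1 - i), by omega⟩).isLt
    omega
  let φ : Fin m → Fin m := fun i => if h : (i : ℕ) < m - q then
    (if f i < 0 then e ⟨i - q, by omega⟩ else e ⟨i, h⟩) else i
  have hinj : Set.InjOn φ
      (Finset.univ.filter (fun i : Fin m => q ≤ (i : ℕ) ∧ (i : ℕ) < m - q) : Finset (Fin m)) := by
    intro a ha b hb hab
    simp only [Finset.coe_filter, Finset.mem_univ, true_and, Set.mem_ofPred_eq] at ha hb
    simp only [φ, ha.2, hb.2, dite_true] at hab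
    split_ifs at hab with h1 h2 h2
    · have := e.injective hab
      simp only [Fin.mk.injEq] at this
      ext; omega
    · have := e.injective hab
      simp only [Fin.mk.injEq] at this
      have h3 : f b ≤ f a := hf (by rw [Fin.le_def]; omega)
      linarith
    · have := e.injective hab
      simp only [Fin.mk.injEq] at this
      have h3 : f a ≤ f b := hf (by rw [Fin.le_def]; omega)
      linarith
    · have := e.injective hab
      simp only [Fin.mk.injEq] at this
      ext; omega
  calc _ ≤ ∑ i ∈ Finset.univ.filter (fun i : Fin m => q ≤ (i : ℕ) ∧ (i : ℕ) < m - q),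
        f (φ i) ^ 2 := by
        apply Finset.sum_le_sum
        intro i hi
        simp only [Finset.mem_filter, Finset.mem_univ, true_and] at hi
        simp only [φ, hi.2, dite_true]
        split_ifs with h1
        · have h3 : f (e ⟨i - q, by omega⟩) ≤ f i := hf (by
            rw [Fin.le_def]
            have := hhi (i - q) (by omega)
            omega)
          nlinarith
        · have h3 : f i ≤ f (e ⟨i, hi.2⟩) := hf (by
            rw [Fin.le_def]
            exact hlo i hi.2)
          nlinarith
    _ = ∑ i ∈ (Finset.univ.filter
          (fun i : Fin m => q ≤ (i : ℕ) ∧ (i : ℕ) < m - q)).image φ, f i ^ 2 :=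
        (Finset.sum_image (f := fun i => f i ^ 2) hinj).symm
    _ ≤ _ := by
        apply Finset.sum_le_sum_of_subset_of_nonneg
        · intro k hk
          simp only [Finset.mem_image, Finset.mem_filter, Finset.mem_univ, true_and] at hk
          obtain ⟨i, hi, rfl⟩ := hk
          simp only [φ, hi.2, dite_true]
          split_ifs
          · exact J.orderEmbOfFin_mem hJ _
          · exact J.orderEmbOfFin_mem hJ _
        · intros; positivity

/-- for any index set `I` of cardinality `m − q`, the sum of
squared residuals over `I` dominates the sum of squared residuals over the
middle `m − 2q` order statistics of `y` (given via a monotone rearrangement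
`y ∘ σ`; the `i`-th smallest entry, 1-indexed, is `y (σ ⟨i−1⟩)`). -/
theorem stmt_12 (m q : ℕ) (hq : 2 * q ≤ m) (y : Fin m → ℝ) (x : ℝ)
    (σ : Equiv.Perm (Fin m)) (hσ : Monotone fun i => y (σ i)) :
    ∀ I : Finset (Fin m), I.card = m - q →
      ∑ i ∈ I, (y i - x) ^ 2 ≥
        ∑ i ∈ Finset.univ.filter (fun i : Fin m => q ≤ (i : ℕ) ∧ (i : ℕ) < m - q),
          (y (σ i) - x) ^ 2 := by
  intro I hI
  have h := core m q hq (fun i => y (σ i) - x)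
    (fun a b hab => sub_le_sub_right (hσ hab) x) (I.map σ.symm.toEmbedding)
    (by rw [Finset.card_map]; exact hI)
  rw [Finset.sum_map] at h
  simpa using h
end

section
/- Let n ≥ 1, let δ > 0, and let μ be a Borel probability measure on ℝ^n. Call a point x ∈ ℝ^n δ-typical if μ(B̄_δ(x)) > n/(n+1), where B̄_δ(x) is the closed Euclidean ball of radius δ centered at x, and let T_δ(μ) := { x ∈ ℝ^n : x is δ-typical }. Then there exists x* ∈ ℝ^n such that T_δ(μ) ⊆ B̄_δ(x*). -/
open MeasureTheory

/-- the set of `δ`-typical points of a Borel probability measure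
`μ` on `ℝ^n` (points `x` with `μ(B̄_δ(x)) > n/(n+1)`) is contained in a closed
ball of radius `δ`. -/
theorem stmt_16 (n : ℕ) (hn : 1 ≤ n) (δ : ℝ) (hδ : 0 < δ)
    (μ : Measure (EuclideanSpace ℝ (Fin n))) [IsProbabilityMeasure μ] :
    ∃ xstar : EuclideanSpace ℝ (Fin n),
      { x : EuclideanSpace ℝ (Fin n) |
          (n : ENNReal) / ((n : ENNReal) + 1) < μ (Metric.closedBall x δ) } ⊆
        Metric.closedBall xstar δ := by
  have h := Convex.helly_theorem_compact' (𝕜 := ℝ)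
    (F := fun x : { x : EuclideanSpace ℝ (Fin n) |
          (n : ENNReal) / ((n : ENNReal) + 1) < μ (Metric.closedBall x δ) } =>
        Metric.closedBall (x : EuclideanSpace ℝ (Fin n)) δ)
    (fun x => convex_closedBall _ _) (fun x => isCompact_closedBall _ _) ?_
  · obtain ⟨y, hy⟩ := h
    refine ⟨y, fun x hx => ?_⟩
    have := Set.mem_iInter.1 hy ⟨x, hx⟩
    rw [Metric.mem_closedBall] at this ⊢
    rwa [dist_comm]
  · intro I hI
    rw [finrank_euclideanSpace_fin] at hI
    by_contra hne
    rw [Set.not_nonempty_iff_eq_empty] at hne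
    have hpos : (0 : ℝ) < (n : ℝ) + 1 := by positivity
    have hc : ∀ i ∈ I, μ.real (Metric.closedBall (i : EuclideanSpace ℝ (Fin n)) δ)ᶜ
        < 1 / ((n : ℝ) + 1) := by
      intro i _
      rw [probReal_compl_eq_one_sub Metric.isClosed_closedBall.measurableSet]
      have h1 := (ENNReal.toReal_lt_toReal
        (ne_top_of_lt i.2) (measure_ne_top μ _)).2 i.2
      rw [ENNReal.toReal_div, ENNReal.toReal_add (by simp) (by simp)] at h1
      simp only [ENNReal.toReal_natCast, ENNReal.toReal_one] at h1
      change _ < μ.real _ at h1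
      have h2 : (n : ℝ) / (n + 1) = 1 - 1 / (n + 1) := by field_simp; ring
      linarith
    have hU : (⋃ i ∈ I, (Metric.closedBall (i : EuclideanSpace ℝ (Fin n)) δ)ᶜ) = Set.univ := by
      rw [← Set.compl_empty, ← hne]
      simp only [Set.compl_iInter]
    have h1 : (1 : ℝ) ≤ ∑ i ∈ I, μ.real (Metric.closedBall (i : EuclideanSpace ℝ (Fin n)) δ)ᶜ := by
      have := measureReal_biUnion_finset_le (μ := μ) I
        (fun i => (Metric.closedBall (i : EuclideanSpace ℝ (Fin n)) δ)ᶜ)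
      rwa [hU, probReal_univ] at this
    rcases I.eq_empty_or_nonempty with h0 | h0
    · subst h0
      norm_num at h1
    · have h2 := Finset.sum_lt_sum_of_nonempty h0 hc
      rw [Finset.sum_const, nsmul_eq_mul, mul_one_div] at h2
      have h3 : ((I.card : ℝ)) ≤ (n : ℝ) + 1 := by exact_mod_cast hI
      have h4 := (div_le_one hpos).2 h3
      linarith
end

section
/- Let n ≥ 1 and let A ⊆ ℝ^n be nonempty and bounded. Then the Chebyshev center of A exists and is unique: there is exactly one point c* ∈ ℝ^n such that sup_{x ∈ A} ‖x − c*‖₂ = inf_{c ∈ ℝ^n} sup_{x ∈ A} ‖x − c‖₂; i.e., the function c ↦ sup_{x ∈ A} ‖x − c‖₂ attains its infimum over ℝ^n at a unique minimizer. -/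
theorem stmt_19 (n : ℕ) (hn : 1 ≤ n) (A : Set (EuclideanSpace ℝ (Fin n)))
    (hA : A.Nonempty) (hbdd : Bornology.IsBounded A) :
    ∃! cstar : EuclideanSpace ℝ (Fin n),
      (⨆ x ∈ A, dist x cstar) =
        ⨅ c : EuclideanSpace ℝ (Fin n), ⨆ x ∈ A, dist x c := by
  obtain ⟨x0, hx0⟩ := hA
  let f : EuclideanSpace ℝ (Fin n) → ℝ := fun c => ⨆ x ∈ A, dist x c
  have h2 : ∀ c r, 0 ≤ r → (∀ x ∈ A, dist x c ≤ r) → f c ≤ r := by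
    intro c r hr h
    exact Real.iSup_le (fun x => Real.iSup_le (fun hx => h x hx) hr) hr
  have h1 : ∀ c, ∀ x ∈ A, dist x c ≤ f c := by
    intro c x hx
    obtain ⟨R, hR⟩ := hbdd.subset_closedBall c
    have hb : BddAbove (Set.range fun x => ⨆ (_ : x ∈ A), dist x c) := by
      refine ⟨max R 0, ?_⟩
      rintro _ ⟨y, rfl⟩
      exact Real.iSup_le (fun hy => le_max_of_le_left (hR hy)) (le_max_right _ _)
    have := le_ciSup hb x
    simpa [hx] using this
  have h0 : ∀ c, 0 ≤ f c := fun c => dist_nonneg.trans (h1 c x0 hx0)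
  have hl : LipschitzWith 1 f := by
    refine LipschitzWith.of_le_add fun c c' => ?_
    refine h2 _ _ (add_nonneg (h0 _) dist_nonneg) fun x hx => ?_
    have := dist_triangle x c' c
    have := h1 c' x hx
    rw [dist_comm c c']
    linarith
  have ht : Filter.Tendsto f (Filter.cocompact _) Filter.atTop :=
    Filter.tendsto_atTop_mono (fun c => h1 c x0 hx0) (tendsto_dist_left_cocompact_atTop x0)
  obtain ⟨c, hc⟩ := hl.continuous.exists_forall_le ht
  have hinf : (⨅ c, f c) = f c :=
    le_antisymm (ciInf_le ⟨0, by rintro _ ⟨y, rfl⟩; exact h0 y⟩ c) (le_ciInf hc)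
  refine ⟨c, hinf.symm, ?_⟩
  intro b hb
  have hb : f b = f c := Eq.trans hb hinf
  have key : ∀ x ∈ A, dist x (midpoint ℝ b c) ^ 2 ≤ f c ^ 2 - dist b c ^ 2 / 4 := by
    intro x hx
    have e1 := h1 b x hx
    have e2 := h1 c x hx
    rw [hb] at e1
    have q1 := pow_le_pow_left₀ dist_nonneg e1 2
    have q2 := pow_le_pow_left₀ dist_nonneg e2 2
    have p := parallelogram_law_with_norm ℝ (x - b) (x - c)
    have r1 : x - b + (x - c) = (2:ℝ) • (x - midpoint ℝ b c) := by
      rw [midpoint_eq_smul_add, invOf_eq_inv]; module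
    have r2 : x - b - (x - c) = c - b := by abel
    rw [r1, r2, norm_smul, ← dist_eq_norm, ← dist_eq_norm, ← dist_eq_norm, ← dist_eq_norm,
      dist_comm c b] at p
    norm_num at p
    nlinarith
  have hS := (sq_nonneg _).trans (key x0 hx0)
  have hm := (hc (midpoint ℝ b c)).trans
    (h2 _ _ (Real.sqrt_nonneg _) fun x hx => Real.le_sqrt_of_sq_le (key x hx))
  have := pow_le_pow_left₀ (h0 c) hm 2
  rw [Real.sq_sqrt hS] at this
  have hd : dist b c ^ 2 = 0 := le_antisymm (by linarith) (sq_nonneg _)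
  exact dist_eq_zero.1 (pow_eq_zero_iff two_ne_zero |>.1 hd)
end
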